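/- Let Γ be a planar lattice that is not rational. If v, w, v', w' ∈ Γ are nonzero vectors with ⟨v, w⟩ = 0 and ⟨v', w'⟩ = 0, then {ℝv', ℝw'} = {ℝv, ℝw}, i.e., v' lies on the line ℝv or on the line ℝw. In particular, Γ possesses at most one rational orthogonal frame, hence exactly one basic rectangular (or square) sublattice when it possesses a rectangular sublattice at all. -/

import Mathlib

noncomputable section

open scoped RealInnerProductSpace

/-- The Euclidean plane. -/
abbrev EucPlane : Type := EuclideanSpace ℝ (Fin 2)

/-- A planar lattice: the additive subgroup generated by two linearly independent vectors. -/
def IsPlanarLattice (Λ : AddSubgroup EucPlane) : Prop :=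
  ∃ v₁ v₂ : EucPlane, LinearIndependent ℝ ![v₁, v₂] ∧ Λ = AddSubgroup.closure {v₁, v₂}

/-- A planar lattice is rational if, after rescaling by some `c > 0`, all inner
products of lattice vectors are rational. -/
def IsRationalLattice (Γ : AddSubgroup EucPlane) : Prop :=
  ∃ c : ℝ, 0 < c ∧ ∀ v ∈ Γ, ∀ w ∈ Γ, ∃ q : ℚ, c * ⟪v, w⟫ = q

/-!
Let `v, w` and `v', w'` be two orthogonal pairs in `Γ`. As `Γ` has rank at most two, `v'` and `w'`
are rational combinations `p v + q w` and `r v + s w`, and orthogonality reads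
`p r ⟪v, v⟫ + q s ⟪w, w⟫ = 0`. If `v'` lies on neither line, then `p` and `q` are nonzero, which
makes `⟪v, v⟫ / ⟪w, w⟫` rational; rescaling by `⟪w, w⟫⁻¹` then makes every inner product on `Γ`
rational.
-/

theorem exists_smul_eq_sum_smul_of_rank_le_card {R M ι : Type*} [Ring R] [Nontrivial R]
    [AddCommGroup M] [Module R M] [Fintype ι] (hrank : Module.rank R M ≤ Fintype.card ι) {v : ι → M}
    (hv : LinearIndependent R v) (x : M) :
    ∃ (c : R) (a : ι → R), c ≠ 0 ∧ c • x = ∑ i, a i • v i := by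
  have hdep : ¬ LinearIndependent R (fun o : Option ι => o.elim x v) := fun hli => by
    have hcard := hli.cardinal_lift_le_rank.trans (Cardinal.lift_le.2 hrank)
    rw [Cardinal.mk_fintype, Cardinal.lift_natCast, Cardinal.lift_natCast, Nat.cast_le,
      Fintype.card_option] at hcard
    exact Nat.not_succ_le_self _ hcard
  obtain ⟨g, hsum, o, hgo⟩ := Fintype.not_linearIndependent_iff.1 hdep
  have hrel : g none • x + ∑ i, g (some i) • v i = 0 := by simpa using hsum
  refine ⟨g none, fun i => -g (some i), fun hgx => hgo ?_, ?_⟩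
  · have hgv : ∀ i, g (some i) = 0 :=
      Fintype.linearIndependent_iff.1 hv _ (by simpa [hgx] using hrel)
    cases o with
    | none => exact hgx
    | some i => exact hgv i
  · simpa using eq_neg_of_add_eq_zero_left hrel

theorem exists_eq_sum_rat_smul_of_rank_le_card {K E ι : Type*} [DivisionRing K] [CharZero K]
    [AddCommGroup E] [Module K E] [Fintype ι] {Γ : AddSubgroup E}
    (hrank : Module.rank ℤ Γ ≤ Fintype.card ι) {v : ι → E} (hv : LinearIndependent ℤ v)
    (hvΓ : ∀ i, v i ∈ Γ) {x : E} (hx : x ∈ Γ) :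
    ∃ q : ι → ℚ, x = ∑ i, (q i : K) • v i := by
  have hli : LinearIndependent ℤ (fun i => (⟨v i, hvΓ i⟩ : Γ)) :=
    hv.of_comp Γ.subtype.toIntLinearMap
  obtain ⟨c, a, hc, hrelΓ⟩ := exists_smul_eq_sum_smul_of_rank_le_card hrank hli ⟨x, hx⟩
  have hrel : c • x = ∑ i, a i • v i := by simpa using congrArg Γ.subtype hrelΓ
  have hcK : (c : K) ≠ 0 := Int.cast_ne_zero.2 hc
  refine ⟨fun i => (c : ℚ)⁻¹ * a i, ?_⟩
  calc
    x = (c : K)⁻¹ • c • x := by rw [← Int.cast_smul_eq_zsmul K c x, inv_smul_smul₀ hcK]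
    _ = ∑ i, (c : K)⁻¹ • a i • v i := by rw [hrel, Finset.smul_sum]
    _ = ∑ i, (((c : ℚ)⁻¹ * a i : ℚ) : K) • v i := by
      push_cast
      simp only [mul_smul, Int.cast_smul_eq_zsmul]

theorem rank_closure_pair_le_two {M : Type*} [AddCommGroup M] (e f : M) :
    Module.rank ℤ (AddSubgroup.closure {e, f}) ≤ 2 := by
  have hspan : Module.rank ℤ (Submodule.span ℤ {e, f}) ≤ 2 :=
    (rank_span_le _).trans (Cardinal.mk_insert_le.trans (by norm_num))
  rwa [← AddSubgroup.toIntSubmodule_closure] at hspan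

theorem IsPlanarLattice.rank_le_two {Γ : AddSubgroup EucPlane} (hΓ : IsPlanarLattice Γ) :
    Module.rank ℤ Γ ≤ 2 := by
  obtain ⟨e, f, -, rfl⟩ := hΓ
  exact rank_closure_pair_le_two e f

section InnerProductSpace

variable {E : Type*} [NormedAddCommGroup E] [InnerProductSpace ℝ E] {v w : E}

/-- A set of vectors has commensurable inner products if a common positive factor makes them all
rational. On subgroups of `EucPlane` this is `IsRationalLattice`. -/
def HasCommensurableInner (S : Set E) : Prop :=
  ∃ c : ℝ, 0 < c ∧ ∀ x ∈ S, ∀ y ∈ S, ∃ q : ℚ, c * ⟪x, y⟫ = q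

theorem linearIndependent_pair_of_inner_eq_zero (hv0 : v ≠ 0) (hw0 : w ≠ 0) (hvw : ⟪v, w⟫ = 0) :
    LinearIndependent ℝ ![v, w] := by
  refine linearIndependent_of_ne_zero_of_inner_eq_zero (𝕜 := ℝ) ?_ ?_
  · simp [Fin.forall_fin_two, hv0, hw0]
  · simp [Pairwise, Fin.forall_fin_two, hvw, real_inner_comm v w ▸ hvw]

theorem inner_smul_add_smul_of_inner_eq_zero (hvw : ⟪v, w⟫ = 0) (p q r s : ℝ) :
    ⟪p • v + q • w, r • v + s • w⟫ = p * r * ⟪v, v⟫ + q * s * ⟪w, w⟫ := by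
  have hwv : ⟪w, v⟫ = 0 := real_inner_comm v w ▸ hvw
  simp only [inner_add_left, inner_add_right, real_inner_smul_left, real_inner_smul_right, hvw, hwv]
  ring

theorem exists_rat_inner_self_eq_mul_of_inner_eq_zero (hvw : ⟪v, w⟫ = 0) {p q r s : ℚ}
    (hp : p ≠ 0) (hq : q ≠ 0) (hne : (r : ℝ) • v + (s : ℝ) • w ≠ 0)
    (horth : ⟪(p : ℝ) • v + (q : ℝ) • w, (r : ℝ) • v + (s : ℝ) • w⟫ = 0) :
    ∃ k : ℚ, ⟪v, v⟫ = k * ⟪w, w⟫ := by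
  rw [inner_smul_add_smul_of_inner_eq_zero hvw] at horth
  have hr : r ≠ 0 := by
    rintro rfl
    have hsw : s = 0 ∨ w = 0 := by simpa [hq] using horth
    exact hne (by simpa using hsw)
  refine ⟨-(q * s) / (p * r), ?_⟩
  push_cast
  field_simp
  linear_combination horth

theorem hasCommensurableInner_of_forall_rat_smul_add_smul {S : Set E} (hw0 : w ≠ 0)
    (hvw : ⟪v, w⟫ = 0) {k : ℚ} (hk : ⟪v, v⟫ = k * ⟪w, w⟫)
    (hS : ∀ x ∈ S, ∃ p q : ℚ, x = (p : ℝ) • v + (q : ℝ) • w) :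
    HasCommensurableInner S := by
  have hww : 0 < ⟪w, w⟫ := real_inner_self_pos.2 hw0
  refine ⟨⟪w, w⟫⁻¹, inv_pos.2 hww, fun x hx y hy => ?_⟩
  obtain ⟨p, q, rfl⟩ := hS x hx
  obtain ⟨r, s, rfl⟩ := hS y hy
  refine ⟨p * r * k + q * s, ?_⟩
  rw [inner_smul_add_smul_of_inner_eq_zero hvw, hk, inv_mul_eq_iff_eq_mul₀ hww.ne']
  push_cast
  ring

theorem non_rational_unique_orthogonal_frame_general {Γ : AddSubgroup E}
    (hrank : Module.rank ℤ Γ ≤ 2) (hirr : ¬ HasCommensurableInner (Γ : Set E)) {v' w' : E}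
    (hv : v ∈ Γ) (hw : w ∈ Γ) (hv' : v' ∈ Γ) (hw' : w' ∈ Γ)
    (hv0 : v ≠ 0) (hw0 : w ≠ 0) (hw'0 : w' ≠ 0) (horth : ⟪v, w⟫ = 0) (horth' : ⟪v', w'⟫ = 0) :
    (∃ t : ℚ, v' = (t : ℝ) • v) ∨ (∃ t : ℚ, v' = (t : ℝ) • w) := by
  have hli : LinearIndependent ℤ ![v, w] :=
    (linearIndependent_pair_of_inner_eq_zero hv0 hw0 horth).restrict_scalars' ℤ
  have hcoord (x : E) (hx : x ∈ Γ) : ∃ p q : ℚ, x = (p : ℝ) • v + (q : ℝ) • w := by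
    obtain ⟨q, hq⟩ := exists_eq_sum_rat_smul_of_rank_le_card (K := ℝ) (by simpa using hrank) hli
      (Fin.forall_fin_two.2 ⟨hv, hw⟩) hx
    exact ⟨q 0, q 1, by simpa using hq⟩
  obtain ⟨p, q, rfl⟩ := hcoord v' hv'
  obtain ⟨r, s, rfl⟩ := hcoord w' hw'
  by_cases hq : q = 0
  · exact .inl ⟨p, by simp [hq]⟩
  by_cases hp : p = 0
  · exact .inr ⟨q, by simp [hp]⟩
  obtain ⟨k, hk⟩ := exists_rat_inner_self_eq_mul_of_inner_eq_zero horth hp hq hw'0 horth'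
  exact absurd (hasCommensurableInner_of_forall_rat_smul_add_smul hw0 horth hk hcoord) hirr

end InnerProductSpace

theorem non_rational_unique_orthogonal_frame
    (Γ : AddSubgroup EucPlane) (hΓ : IsPlanarLattice Γ) (hirr : ¬ IsRationalLattice Γ)
    (v w v' w' : EucPlane) (hv : v ∈ Γ) (hw : w ∈ Γ) (hv' : v' ∈ Γ) (hw' : w' ∈ Γ)
    (hv0 : v ≠ 0) (hw0 : w ≠ 0) (hv'0 : v' ≠ 0) (hw'0 : w' ≠ 0)
    (horth : ⟪v, w⟫ = 0) (horth' : ⟪v', w'⟫ = 0) :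
    (∃ t : ℝ, v' = t • v) ∨ (∃ t : ℝ, v' = t • w) := by
  rcases non_rational_unique_orthogonal_frame_general hΓ.rank_le_two hirr hv hw hv' hw' hv0 hw0
    hw'0 horth horth' with ⟨t, ht⟩ | ⟨t, ht⟩
  exacts [.inl ⟨t, ht⟩, .inr ⟨t, ht⟩]
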